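/- arXiv:1705.08437 — 4 statements merged into one kernel-verified Lean document; each statement's English description precedes it below -/
import Mathlib

section
/- Let T ≥ 2 and m be integers, let A ∈ F_2^{T×m}, and let k be an integer with ⌈T/2⌉ ≤ k. Let P ∈ F_2^{(T+1)×T} be the matrix whose first T rows form the identity matrix I_T and whose last row is the all-ones row 1_T, and set A_k = P·A. Then every vector in the row space of A (i.e., every vector of the form d·A with d ∈ F_2^T) is the sum of at most k rows of A_k. -/
/-- For `T ≥ 2`, `A ∈ F_2^{T×m}`, `⌈T/2⌉ ≤ k`, and `P ∈ F_2^{(T+1)×T}` obtained by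
stacking the identity `I_T` on top of the all-ones row, every vector in the row space of `A`
(i.e. every `d ᵥ* A`) is the sum of at most `k` rows of `A_k = P * A`. -/
theorem case_I_construction
    (T m k : ℕ) (hT : 2 ≤ T) (hk : (T + 1) / 2 ≤ k)
    (A : Matrix (Fin T) (Fin m) (ZMod 2))
    (P : Matrix (Fin (T + 1)) (Fin T) (ZMod 2))
    (hP : ∀ (i : Fin (T + 1)) (j : Fin T),
      P i j = if (i : ℕ) = T then 1 else if (i : ℕ) = (j : ℕ) then 1 else 0) :
    ∀ d : Fin T → ZMod 2, ∃ U : Finset (Fin (T + 1)),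
      U.card ≤ k ∧ Matrix.vecMul d A = ∑ i ∈ U, (P * A) i := by
  intro d
  have key : ∃ U : Finset (Fin (T + 1)), U.card ≤ k ∧ ∀ j, d j = ∑ i ∈ U, P i j := by
    have hsum : ∀ (S : Finset (Fin T)) (j : Fin T),
        ∑ i ∈ S.map Fin.castSuccEmb, P i j = if j ∈ S then 1 else 0 := by
      intro S j
      rw [Finset.sum_map]
      have h : ∀ i ∈ S, P (Fin.castSuccEmb i) j = if i = j then 1 else 0 := by
        intro i _
        rw [hP]
        have := i.isLt
        simp [Fin.ext_iff, this.ne]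
        try rfl
      rw [Finset.sum_congr rfl h]
      simp
    have h2 : ∀ x : ZMod 2, x = if x = 1 then 1 else 0 := by decide
    have h3 : ∀ x : ZMod 2, x = 1 + if x = 0 then 1 else 0 := by decide
    have hc : (Finset.univ.filter (fun j => d j = 1)).card
        + (Finset.univ.filter (fun j => d j = 0)).card = T := by
      have h := Finset.card_filter_add_card_filter_not (s := (Finset.univ : Finset (Fin T)))
        (fun j => d j = 1)
      have h4 : ∀ x : ZMod 2, ¬ x = 1 ↔ x = 0 := by decide
      simpa [h4] using h
    by_cases hw : (Finset.univ.filter (fun j => d j = 1)).card ≤ k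
    · refine ⟨(Finset.univ.filter (fun j => d j = 1)).map Fin.castSuccEmb, by simpa using hw, ?_⟩
      intro j
      rw [hsum]
      simpa using h2 (d j)
    · have hl : Fin.last T ∉
          (Finset.univ.filter (fun j => d j = 0)).map Fin.castSuccEmb := by
        simp [Fin.ext_iff, fun i : Fin T => i.isLt.ne]
      refine ⟨insert (Fin.last T)
        ((Finset.univ.filter (fun j => d j = 0)).map Fin.castSuccEmb), ?_, ?_⟩
      · rw [Finset.card_insert_of_notMem hl, Finset.card_map]
        omega
      · intro j
        rw [Finset.sum_insert hl, hsum, hP]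
        simpa using h3 (d j)
  obtain ⟨U, hU, hd⟩ := key
  refine ⟨U, hU, ?_⟩
  have hd' : d = ∑ i ∈ U, (fun j => P i j) := by
    funext j
    rw [Finset.sum_apply]
    exact hd j
  rw [hd', Matrix.sum_vecMul]
  rfl
end

section
/- Let T and k be integers with T ≥ 2 and 2 ≤ k < ⌈T/2⌉. Set T_c = ⌈T/(2k−1)⌉, T_last = T − (2k−1)(T_c − 1), and T_ub = 2·(2k+1)^{T_c − 1} if T_last = 1 and T_ub = (2k+1)^{T_c − 1}·(T_last + 2) otherwise. Then there exists a set S ⊆ F_2^T with |S| ≤ T_ub such that every vector of F_2^T is the sum of at most k (not necessarily distinct) elements of S. -/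
/-- `Cov m k c`: some set of at most `c` vectors of `F_2^m` has every vector as a sum of
exactly `k` of its elements. -/
def Cov (m k c : ℕ) : Prop :=
  ∃ A : Finset (Fin m → ZMod 2), A.card ≤ c ∧
    ∀ d : Fin m → ZMod 2, ∃ f : Fin k → (Fin m → ZMod 2), (∀ i, f i ∈ A) ∧ ∑ i, f i = d

theorem cov_append {m n k a b : ℕ} (h1 : Cov m k a) (h2 : Cov n k b) :
    Cov (m + n) k (a * b) := by
  classical
  obtain ⟨A, hA, hA'⟩ := h1
  obtain ⟨B, hB, hB'⟩ := h2
  refine ⟨(A ×ˢ B).image (fun p => Fin.append p.1 p.2), ?_, ?_⟩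
  · refine Finset.card_image_le.trans ?_
    rw [Finset.card_product]
    exact Nat.mul_le_mul hA hB
  · intro d
    obtain ⟨f, hf, hfs⟩ := hA' (fun i => d (Fin.castAdd n i))
    obtain ⟨g, hg, hgs⟩ := hB' (fun i => d (Fin.natAdd m i))
    refine ⟨fun i => Fin.append (f i) (g i), ?_, ?_⟩
    · intro i
      exact Finset.mem_image.2 ⟨(f i, g i), Finset.mem_product.2 ⟨hf i, hg i⟩, rfl⟩
    · funext j
      rw [Finset.sum_apply]
      refine Fin.addCases (fun j => ?_) (fun j => ?_) j
      · have := congrFun hfs j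
        rw [Finset.sum_apply] at this
        simpa using this
      · have := congrFun hgs j
        rw [Finset.sum_apply] at this
        simpa using this

theorem units_sum {m : ℕ} (j : ℕ) : ∀ d : Fin m → ZMod 2,
    (Finset.univ.filter (fun i => d i ≠ 0)).card ≤ j →
    ∃ f : Fin j → (Fin m → ZMod 2),
      (∀ i, f i = 0 ∨ ∃ t, f i = Pi.single t 1) ∧ ∑ i, f i = d := by
  induction j with
  | zero =>
    intro d hd
    refine ⟨fun _ => 0, fun i => Or.inl rfl, ?_⟩
    have h0 := Finset.card_eq_zero.1 (Nat.le_zero.1 hd)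
    funext i
    have := Finset.filter_eq_empty_iff.1 h0 (Finset.mem_univ i)
    simp at this
    simp [this]
  | succ j ih =>
    intro d hd
    by_cases h0 : ∃ t, d t ≠ 0
    · obtain ⟨t, ht⟩ := h0
      have ht1 : d t = 1 := by
        generalize d t = x at ht
        revert x
        decide
      obtain ⟨f, hf, hfs⟩ := ih (d - Pi.single t 1) (by
        have hs : (Finset.univ.filter (fun i => (d - (Pi.single t 1 : Fin m → ZMod 2)) i ≠ 0))
            ⊆ (Finset.univ.filter (fun i => d i ≠ 0)).erase t := by
          intro i hi
          simp only [Finset.mem_filter, Finset.mem_univ, true_and, Finset.mem_erase] at hi ⊢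
          by_cases hit : i = t
          · subst hit
            simp [ht1] at hi
          · refine ⟨hit, ?_⟩
            simpa [hit] using hi
        have h1 := Finset.card_le_card hs
        rw [Finset.card_erase_of_mem (by simp [ht])] at h1
        omega)
      refine ⟨Fin.cons (Pi.single t 1) f, ?_, ?_⟩
      · intro i
        refine Fin.cases ?_ (fun i => ?_) i
        · exact Or.inr ⟨t, by simp⟩
        · simpa using hf i
      · rw [Fin.sum_univ_succ]
        simp [hfs]
    · push Not at h0
      refine ⟨fun _ => 0, fun i => Or.inl rfl, ?_⟩
      funext i
      simp [h0 i]

theorem cov_block {m k : ℕ} (hk : 1 ≤ k) (hm : m ≤ 2 * k - 1) : Cov m k (m + 2) := by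
  classical
  refine ⟨insert 0 (insert 1 (Finset.univ.image (fun t : Fin m => Pi.single t (1 : ZMod 2)))),
    ?_, ?_⟩
  · refine (Finset.card_insert_le _ _).trans ?_
    have h1 := Finset.card_insert_le (1 : Fin m → ZMod 2)
      (Finset.univ.image (fun t : Fin m => Pi.single t (1 : ZMod 2)))
    have h2 : (Finset.univ.image (fun t : Fin m => (Pi.single t 1 : Fin m → ZMod 2))).card ≤ m :=
      Finset.card_image_le.trans (by simp)
    omega
  · intro d
    by_cases hd : (Finset.univ.filter (fun i => d i ≠ 0)).card ≤ k
    · obtain ⟨f, hf, hfs⟩ := units_sum k d hd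
      refine ⟨f, fun i => ?_, hfs⟩
      rcases hf i with h | ⟨t, h⟩ <;> rw [h] <;> simp
    · obtain ⟨k, rfl⟩ : ∃ k', k = k' + 1 := ⟨k - 1, by omega⟩
      obtain ⟨f, hf, hfs⟩ := units_sum k (d - 1) (by
        have h1 := Finset.card_filter_add_card_filter_not (s := (Finset.univ : Finset (Fin m)))
          (fun i => d i ≠ 0)
        have h2 : (Finset.univ.filter (fun i => (d - 1) i ≠ 0))
            = Finset.univ.filter (fun i => ¬ d i ≠ 0) := by
          apply Finset.filter_congr
          intro i _
          have : ∀ x : ZMod 2, x - 1 ≠ 0 ↔ ¬ x ≠ 0 := by decide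
          exact this (d i)
        rw [h2]
        simp only [Finset.card_univ, Fintype.card_fin] at h1
        omega)
      refine ⟨Fin.cons 1 f, ?_, ?_⟩
      · intro i
        refine Fin.cases ?_ (fun i => ?_) i
        · simp
        · rw [Fin.cons_succ]
          rcases hf i with h | ⟨t, h⟩ <;> rw [h] <;> simp
      · rw [Fin.sum_univ_succ]
        simp [hfs]

theorem cov_one {k : ℕ} (hk : 1 ≤ k) : Cov 1 k 2 := by
  classical
  refine ⟨Finset.univ, by simp [Finset.card_univ, ZMod.card], fun d => ?_⟩
  refine ⟨Pi.single ⟨0, hk⟩ d, fun i => Finset.mem_univ _, ?_⟩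
  simp

theorem cov_pow {m k a l c : ℕ} (h : Cov m k a) (hl : Cov l k c) (n : ℕ) :
    Cov (m * n + l) k (a ^ n * c) := by
  induction n with
  | zero => simpa using hl
  | succ n ih =>
    have := cov_append h ih
    have e1 : m + (m * n + l) = m * (n + 1) + l := by ring
    have e2 : a * (a ^ n * c) = a ^ (n + 1) * c := by ring
    rwa [e1, e2] at this

/-- Case II upper bound of Theorem 1.  For `2 ≤ k < ⌈T/2⌉`, with
`T_c = ⌈T/(2k−1)⌉`, `T_last = T − (2k−1)(T_c − 1)` and `T_ub` as in (5), there is a set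
`S ⊆ F_2^T` with `|S| ≤ T_ub` such that every vector of `F_2^T` is the sum of at most `k`
(not necessarily distinct) elements of `S`. -/
theorem case_II_construction
    (T k Tc Tlast Tub : ℕ)
    (hT : 2 ≤ T) (hk2 : 2 ≤ k) (hk : k < (T + 1) / 2)
    (hTc : Tc = (T + (2 * k - 1) - 1) / (2 * k - 1))
    (hTlast : Tlast = T - (2 * k - 1) * (Tc - 1))
    (hTub : Tub = if Tlast = 1 then 2 * (2 * k + 1) ^ (Tc - 1)
                  else (2 * k + 1) ^ (Tc - 1) * (Tlast + 2)) :
    ∃ S : Finset (Fin T → ZMod 2), S.card ≤ Tub ∧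
      ∀ d : Fin T → ZMod 2, ∃ L : Multiset (Fin T → ZMod 2),
        Multiset.card L ≤ k ∧ (∀ x ∈ L, x ∈ S) ∧ L.sum = d := by
  have hcov : Cov T k Tub := by
    obtain ⟨m, hm⟩ : ∃ m, m = 2 * k - 1 := ⟨_, rfl⟩
    have hm3 : 3 ≤ m := by omega
    have e : 2 * k + 1 = m + 2 := by omega
    rw [← hm] at hTc hTlast
    rw [e] at hTub
    have hdm := Nat.div_add_mod (T + m - 1) m
    have hlt := Nat.mod_lt (T + m - 1) (show 0 < m by omega)
    rw [← hTc] at hdm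
    have hTc1 : 1 ≤ Tc := by
      rw [hTc]
      exact (Nat.one_le_div_iff (by omega)).2 (by omega)
    obtain ⟨n, rfl⟩ : ∃ n, Tc = n + 1 := ⟨Tc - 1, by omega⟩
    rw [Nat.add_sub_cancel] at hTlast hTub
    rw [Nat.mul_succ] at hdm
    have hTe : T = m * n + Tlast := by omega
    have hle : Tlast ≤ m := by omega
    have hb : Cov m k (m + 2) := cov_block (by omega) (by omega)
    rw [hTe, hTub]
    split_ifs with h1
    · rw [h1, mul_comm 2]
      exact cov_pow hb (cov_one (by omega)) n
    · exact cov_pow hb (cov_block (by omega) (by omega)) n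
  obtain ⟨S, hS, h⟩ := hcov
  refine ⟨S, hS, fun d => ?_⟩
  obtain ⟨f, hf, hfs⟩ := h d
  refine ⟨Finset.univ.val.map f, by simp, ?_, hfs⟩
  intro x hx
  obtain ⟨i, _, rfl⟩ := Multiset.mem_map.1 hx
  exact hf i
end

section
/- Let T and k be integers with T ≥ 2 and 2 ≤ k < ⌈T/2⌉. Then there exists a set S ⊆ F_2^T with |S| ≤ (2k+1)^{⌈T/(2k−1)⌉} such that every vector of F_2^T is the sum of at most k (not necessarily distinct) elements of S. -/
/-- Code `c` denotes: a unit vector for `c < n`, all-ones for `c = n`, zero for `c = n+1`. -/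
def codeVal (n : ℕ) (c : Fin (n + 2)) (j : ℕ) : ZMod 2 :=
  if (c : ℕ) = j ∨ (c : ℕ) = n then 1 else 0

lemma code_small (n : ℕ) (k : ℕ) : ∀ A : Finset ℕ, A ⊆ Finset.range n → A.card ≤ k →
    ∃ c : Fin k → Fin (n + 2), ∀ j < n, ∑ i, codeVal n (c i) j = if j ∈ A then 1 else 0 := by
  induction k with
  | zero =>
    intro A _ hc
    have : A = ∅ := by simpa using hc
    subst this
    exact ⟨fun _ => 0, by simp⟩
  | succ k ih =>
    intro A hA hc
    rcases A.eq_empty_or_nonempty with rfl | ⟨a, ha⟩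
    · refine ⟨fun _ => ⟨n + 1, by omega⟩, fun j hj => ?_⟩
      have : ¬ (n + 1 = j) := by omega
      simp [codeVal, this]
    · obtain ⟨c, hcc⟩ := ih (A.erase a) ((Finset.erase_subset _ _).trans hA)
        (by rw [Finset.card_erase_of_mem ha]; omega)
      have han : a < n := by simpa using hA ha
      refine ⟨Fin.cons ⟨a, by omega⟩ c, fun j hj => ?_⟩
      rw [Fin.sum_univ_succ]
      simp only [Fin.cons_zero, Fin.cons_succ]
      rw [hcc j hj]
      have h2 : a ≠ n := by omega
      by_cases h : j = a
      · subst h; simp [codeVal, ha]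
      · have h' : ¬ a = j := fun e => h e.symm
        simp [codeVal, h, h', h2]

lemma code_all (n k : ℕ) (hn : n + 1 = 2 * k) (v : ℕ → ZMod 2) :
    ∃ c : Fin k → Fin (n + 2), ∀ j < n, ∑ i, codeVal n (c i) j = v j := by
  have hz : ∀ x : ZMod 2, x = 0 ∨ x = 1 := by decide
  have hcard := Finset.card_filter_add_card_filter_not (s := Finset.range n) (fun j => v j = 1)
  rw [Finset.card_range] at hcard
  by_cases h : ((Finset.range n).filter (fun j => v j = 1)).card ≤ k
  · obtain ⟨c, hc⟩ := code_small n k _ (Finset.filter_subset _ _) h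
    refine ⟨c, fun j hj => ?_⟩
    rw [hc j hj]
    rcases hz (v j) with e | e <;> simp [e, hj]
  · obtain ⟨k, rfl⟩ : ∃ l, k = l + 1 := ⟨k - 1, by omega⟩
    obtain ⟨c, hc⟩ := code_small n k ((Finset.range n).filter (fun j => ¬ v j = 1))
      (Finset.filter_subset _ _) (by omega)
    refine ⟨Fin.cons ⟨n, by omega⟩ c, fun j hj => ?_⟩
    rw [Fin.sum_univ_succ]
    simp only [Fin.cons_zero, Fin.cons_succ]
    rw [hc j hj]
    have h11 : (1 : ZMod 2) + 1 = 0 := by decide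
    rcases hz (v j) with e | e <;> simp [e, hj, codeVal, h11]

/-- Asymptotic form of the Case II upper bound: for `2 ≤ k < ⌈T/2⌉` there is a
set `S ⊆ F_2^T` with `|S| ≤ (2k+1)^{⌈T/(2k−1)⌉}` such that every vector of `F_2^T` is the sum
of at most `k` (not necessarily distinct) elements of `S`. -/
theorem case_II_construction_asymptotic
    (T k : ℕ) (hT : 2 ≤ T) (hk2 : 2 ≤ k) (hk : k < (T + 1) / 2) :
    ∃ S : Finset (Fin T → ZMod 2),
      S.card ≤ (2 * k + 1) ^ ((T + (2 * k - 1) - 1) / (2 * k - 1)) ∧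
      ∀ d : Fin T → ZMod 2, ∃ L : Multiset (Fin T → ZMod 2),
        Multiset.card L ≤ k ∧ (∀ x ∈ L, x ∈ S) ∧ L.sum = d := by
  classical
  obtain ⟨n, hn⟩ : ∃ n, n = 2 * k - 1 := ⟨_, rfl⟩
  have hn1 : n + 1 = 2 * k := by omega
  have hn2 : 2 * k + 1 = n + 2 := by omega
  rw [← hn, hn2]
  have hn0 : 0 < n := by omega
  obtain ⟨m, hm⟩ : ∃ m, m = (T + n - 1) / n := ⟨_, rfl⟩
  rw [← hm]
  have hb : ∀ t : Fin T, (t : ℕ) / n < m := by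
    intro t
    have := t.2
    rw [hm, Nat.lt_iff_add_one_le, Nat.le_div_iff_mul_le hn0, add_mul, one_mul]
    have := Nat.div_mul_le_self t n
    omega
  let F : (Fin m → Fin (n + 2)) → (Fin T → ZMod 2) :=
    fun f t => codeVal n (f ⟨t / n, hb t⟩) (t % n)
  refine ⟨Finset.univ.image F, Finset.card_image_le.trans (by simp), fun d => ?_⟩
  have key := fun b : Fin m => code_all n k hn1
    (fun j => if h : b * n + j < T then d ⟨b * n + j, h⟩ else 0)
  choose c hc using key
  refine ⟨(Finset.univ : Finset (Fin k)).val.map (fun i => F (fun b => c b i)), by simp, ?_, ?_⟩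
  · intro x hx
    obtain ⟨i, -, rfl⟩ := Multiset.mem_map.1 hx
    exact Finset.mem_image_of_mem _ (Finset.mem_univ _)
  · change ∑ i, F (fun b => c b i) = d
    funext t
    rw [Finset.sum_apply]
    refine (hc ⟨t / n, hb t⟩ (t % n) (Nat.mod_lt _ hn0)).trans ?_
    simp [Nat.div_add_mod']
end

section
/- Let T ≥ 2 and k be integers with ⌈T/2⌉ ≤ k < T. Then ∑_{i=1}^{k} C(T+1, i) ≥ 2^T − 1, and therefore the smallest positive integer N satisfying ∑_{i=1}^{k} C(N, i) ≥ 2^T − 1 equals exactly T + 1. -/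
lemma aux_sum (N k : ℕ) :
    ∑ i ∈ Finset.range (k + 1), N.choose i = (∑ i ∈ Finset.Icc 1 k, N.choose i) + 1 := by
  induction k with
  | zero => simp
  | succ k ih =>
    rw [Finset.sum_range_succ, ih, Finset.sum_Icc_succ_top (by omega)]
    ring

lemma aux_half (T : ℕ) :
    2 ^ T ≤ ∑ i ∈ Finset.range ((T + 1) / 2 + 1), (T + 1).choose i := by
  obtain ⟨m, rfl | rfl⟩ := Nat.even_or_odd' T
  · have h : (2 * m + 1) / 2 = m := by omega
    rw [h, Nat.sum_range_choose_halfway, pow_mul]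
    norm_num
  · have h : (2 * m + 1 + 1) / 2 = m + 1 := by omega
    rw [h, Finset.sum_range_succ']
    simp only [Nat.choose_succ_succ (2 * m + 1), Nat.succ_eq_add_one, Finset.sum_add_distrib]
    have h1 := Nat.sum_range_choose_halfway m
    have h2 := Finset.sum_range_succ' (fun i => (2 * m + 1).choose i) (m + 1)
    have h3 := Finset.sum_range_succ (fun i => (2 * m + 1).choose i) (m + 1)
    have h4 : 2 ^ (2 * m + 1) = 2 * 4 ^ m := by rw [pow_succ, pow_mul]; norm_num; ring
    simp only [Nat.choose_zero_right] at *
    omega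

/-- For `⌈T/2⌉ ≤ k < T`, `∑_{i=1}^k C(T+1,i) ≥ 2^T − 1`, and the smallest
positive integer `N` with `∑_{i=1}^k C(N,i) ≥ 2^T − 1` is exactly `T + 1`. -/
theorem lemma2_first_bullet
    (T k : ℕ) (hT : 2 ≤ T) (hk : (T + 1) / 2 ≤ k) (hkT : k < T) :
    (2 ^ T - 1 ≤ ∑ i ∈ Finset.Icc 1 k, (T + 1).choose i) ∧
    IsLeast {N : ℕ | 0 < N ∧ 2 ^ T - 1 ≤ ∑ i ∈ Finset.Icc 1 k, N.choose i} (T + 1) := by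
  have h1 : 2 ^ T - 1 ≤ ∑ i ∈ Finset.Icc 1 k, (T + 1).choose i := by
    have a := aux_half T
    have b : ∑ i ∈ Finset.range ((T + 1) / 2 + 1), (T + 1).choose i
        ≤ ∑ i ∈ Finset.range (k + 1), (T + 1).choose i :=
      Finset.sum_le_sum_of_subset (Finset.range_subset_range.2 (by omega))
    rw [aux_sum (T + 1) k] at b
    omega
  refine ⟨h1, ⟨Nat.succ_pos T, h1⟩, ?_⟩
  rintro N ⟨_, hN⟩
  by_contra! hlt
  have a : ∑ i ∈ Finset.Icc 1 k, N.choose i ≤ ∑ i ∈ Finset.Icc 1 k, T.choose i :=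
    Finset.sum_le_sum fun i _ => Nat.choose_le_choose i (by omega)
  have b : ∑ i ∈ Finset.range (k + 1), T.choose i ≤ ∑ i ∈ Finset.range T, T.choose i :=
    Finset.sum_le_sum_of_subset (Finset.range_subset_range.2 (by omega))
  have c := Nat.sum_range_choose T
  rw [Finset.sum_range_succ, Nat.choose_self] at c
  rw [aux_sum] at b
  omega
end
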